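/- arXiv:2305.09547 — 2 statements merged into one kernel-verified Lean document; each statement's English description precedes it below -/
import Mathlib

section
/- Let m be a coherent probability measure with two representations (μ₁,ν₁), (μ₂,ν₂) ∈ R(m) (so m = μᵢ + νᵢ and each pair satisfies the marginal conditions defining R). Then μ₁ and μ₂ have the same marginal distributions: μ₁ˣ = μ₂ˣ and μ₁ʸ = μ₂ʸ. -/
open MeasureTheory Set

/-- A probability measure on `ℝ × ℝ` (supported on `[0,1]²`) is *coherent* if it is the
joint law of `(X, Y)` with `X = 𝔼(Z|X)`, `Y = 𝔼(Z|Y)` a.s. for some `Z` in `[0,1]`. -/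
def IsCoherent (m : Measure (ℝ × ℝ)) : Prop :=
  ∃ (Ω : Type) (_mΩ : MeasurableSpace Ω) (P : Measure Ω) (_ : IsProbabilityMeasure P)
    (X Y Z : Ω → ℝ),
      Measurable X ∧ Measurable Y ∧ Measurable Z ∧
      (∀ ω, Z ω ∈ Set.Icc (0 : ℝ) 1) ∧
      Measure.map (fun ω => (X ω, Y ω)) P = m ∧
      X =ᵐ[P] P[Z | MeasurableSpace.comap X (borel ℝ)] ∧
      Y =ᵐ[P] P[Z | MeasurableSpace.comap Y (borel ℝ)]

/-- The pair `(μ, ν)` belongs to the class `R`. -/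
def MemR (μ ν : Measure (ℝ × ℝ)) : Prop :=
  ∀ A : Set ℝ, MeasurableSet A →
    (∫ x in A, (1 - x) ∂(μ.map Prod.fst) = ∫ x in A, x ∂(ν.map Prod.fst)) ∧
    (∫ y in A, (1 - y) ∂(μ.map Prod.snd) = ∫ y in A, y ∂(ν.map Prod.snd))

/-!
Adding `∫_A x dμˣ` to both sides of `∫_A (1 - x) dμˣ = ∫_A x dνˣ` gives `μˣ(A) = ∫_A x dmˣ`. Hence
`μˣ` has density `x` with respect to `mˣ`, so it depends on `m` only; likewise for `μʸ`.
-/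

/-- A function `p` is a posterior for `(μ, ν)` if `(1 - p) dμ = p dν`: when a point is drawn from
`μ + ν`, `p x` is the probability, given the point `x`, that it belongs to the `μ` part. It isolates
the condition that `MemR` puts on each marginal. As there, the integrals are Bochner integrals, so a
side that is not integrable counts as `0`. -/
def IsPosterior {α : Type*} [MeasurableSpace α] (p : α → ℝ) (μ ν : Measure α) : Prop :=
  ∀ A : Set α, MeasurableSet A → ∫ x in A, (1 - p x) ∂μ = ∫ x in A, p x ∂ν

namespace IsPosterior

variable {α : Type*} [MeasurableSpace α] {p : α → ℝ} {μ ν : Measure α}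

lemma restrict (h : IsPosterior p μ ν) {s : Set α} (hs : MeasurableSet s) :
    IsPosterior p (μ.restrict s) (ν.restrict s) := fun A hA ↦ by
  simpa only [Measure.restrict_restrict hA] using h (A ∩ s) (hA.inter hs)

lemma setIntegral_add_eq_measureReal [IsFiniteMeasure μ] (h : IsPosterior p μ ν)
    (hp : Integrable p (μ + ν)) {A : Set α} (hA : MeasurableSet A) :
    ∫ x in A, p x ∂(μ + ν) = μ.real A := by
  have hpμ : IntegrableOn p A μ := hp.left_of_add_measure.integrableOn
  have hpν : IntegrableOn p A ν := hp.right_of_add_measure.integrableOn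
  calc ∫ x in A, p x ∂(μ + ν) = ∫ x in A, p x ∂μ + ∫ x in A, p x ∂ν := by
        rw [Measure.restrict_add, integral_add_measure hpμ hpν]
    _ = ∫ x in A, p x ∂μ + ∫ x in A, (1 - p x) ∂μ := by rw [h A hA]
    _ = ∫ _ in A, (1 : ℝ) ∂μ := by
        rw [integral_sub (integrable_const 1) hpμ, add_sub_cancel]
    _ = μ.real A := setIntegral_one_eq_measureReal

lemma eq_withDensity_of_integrable [IsFiniteMeasure μ] (h : IsPosterior p μ ν)
    (hp : Integrable p (μ + ν)) :
    μ = (μ + ν).withDensity fun x ↦ ENNReal.ofReal (p x) := by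
  have p_nonneg : 0 ≤ᵐ[μ + ν] p :=
    ae_nonneg_of_forall_setIntegral_nonneg hp fun A hA _ ↦ by
      rw [h.setIntegral_add_eq_measureReal hp hA]
      exact measureReal_nonneg
  ext A hA
  rw [withDensity_apply _ hA,
    ← ofReal_integral_eq_lintegral_ofReal hp.integrableOn (ae_restrict_of_ae p_nonneg),
    h.setIntegral_add_eq_measureReal hp hA, ofReal_measureReal]

theorem eq_withDensity [SigmaFinite (μ + ν)] (h : IsPosterior p μ ν) (hp : Measurable p) :
    μ = (μ + ν).withDensity fun x ↦ ENNReal.ofReal (p x) := by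
  -- Adding the integrals of `p` needs integrability, so we localise to sets where `p` is bounded.
  obtain ⟨s, hs, s_cover⟩ :=
    exists_spanning_measurableSet_le hp.nnnorm (μ + ν)
  refine Measure.ext_of_iUnion_eq_univ s_cover fun n ↦ ?_
  obtain ⟨s_meas, s_finite, s_bound⟩ := hs n
  have : IsFiniteMeasure (μ.restrict (s n)) :=
    isFiniteMeasure_restrict.2 <|
      ne_top_of_le_ne_top s_finite.ne (Measure.le_add_right le_rfl (s n))
  have p_integrable : IntegrableOn p (s n) (μ + ν) :=
    Measure.integrableOn_of_bounded s_finite.ne hp.aestronglyMeasurable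
      (ae_restrict_of_forall_mem s_meas fun x hx ↦ NNReal.coe_le_coe.2 (s_bound x hx))
  rw [restrict_withDensity s_meas, Measure.restrict_add]
  refine (h.restrict s_meas).eq_withDensity_of_integrable ?_
  rwa [← Measure.restrict_add]

theorem left_unique {m μ₁ ν₁ μ₂ ν₂ : Measure α} [SigmaFinite m]
    (h₁ : IsPosterior p μ₁ ν₁) (h₂ : IsPosterior p μ₂ ν₂) (hp : Measurable p)
    (hm₁ : m = μ₁ + ν₁) (hm₂ : m = μ₂ + ν₂) : μ₁ = μ₂ := by
  have : SigmaFinite (μ₁ + ν₁) := hm₁ ▸ inferInstance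
  have : SigmaFinite (μ₂ + ν₂) := hm₂ ▸ inferInstance
  rw [h₁.eq_withDensity hp, ← hm₁, hm₂, ← h₂.eq_withDensity hp]

end IsPosterior

section Marginals

variable {μ ν : Measure (ℝ × ℝ)}

lemma MemR.isPosterior_fst (h : MemR μ ν) :
    IsPosterior id (μ.map Prod.fst) (ν.map Prod.fst) := fun A hA ↦ (h A hA).1

lemma MemR.isPosterior_snd (h : MemR μ ν) :
    IsPosterior id (μ.map Prod.snd) (ν.map Prod.snd) := fun A hA ↦ (h A hA).2

end Marginals

theorem stmt11_general {m μ₁ ν₁ μ₂ ν₂ : Measure (ℝ × ℝ)}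
    [SigmaFinite (m.map Prod.fst)] [SigmaFinite (m.map Prod.snd)]
    (h1 : m = μ₁ + ν₁) (hR1 : MemR μ₁ ν₁)
    (h2 : m = μ₂ + ν₂) (hR2 : MemR μ₂ ν₂) :
    μ₁.map Prod.fst = μ₂.map Prod.fst ∧ μ₁.map Prod.snd = μ₂.map Prod.snd := by
  have map_split {μ ν : Measure (ℝ × ℝ)} (h : m = μ + ν) {f : ℝ × ℝ → ℝ} (hf : Measurable f) :
      m.map f = μ.map f + ν.map f := by
    rw [h, Measure.map_add _ _ hf]
  exact ⟨hR1.isPosterior_fst.left_unique hR2.isPosterior_fst measurable_id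
      (map_split h1 measurable_fst) (map_split h2 measurable_fst),
    hR1.isPosterior_snd.left_unique hR2.isPosterior_snd measurable_id
      (map_split h1 measurable_snd) (map_split h2 measurable_snd)⟩

theorem stmt11 (m μ₁ ν₁ μ₂ ν₂ : Measure (ℝ × ℝ)) [IsProbabilityMeasure m]
    (hcoh : IsCoherent m)
    (h1 : m = μ₁ + ν₁) (hR1 : MemR μ₁ ν₁)
    (h2 : m = μ₂ + ν₂) (hR2 : MemR μ₂ ν₂) :
    μ₁.map Prod.fst = μ₂.map Prod.fst ∧ μ₁.map Prod.snd = μ₂.map Prod.snd :=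
  stmt11_general h1 hR1 h2 hR2
end

section
/- Let η be a finitely supported extreme point of the set C of coherent distributions, with unique representation (μ,ν) and quotient function q(x,y) = μ(x,y)/(μ(x,y)+ν(x,y)). Then q(x,y) = 0 for every lower out point (i.e., every support point with q(x,y) < min(x,y)), and q(x,y) = 1 for every upper out point (every support point with q(x,y) > max(x,y)). -/
open MeasureTheory Set

open Filter Topology

/-!
Put `w p = (μ {p}, ν {p})`. Membership of `(μ, ν)` in `R` is a system of linear equations in `w`:
on each vertical and on each horizontal line, the deviations of `Z` from its prediction cancel.
Extremality together with uniqueness says that the only balanced directions within the support of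
`w` are the multiples of `w`.

Suppose that `w p` has two positive entries at a lower out point `p`. Mass added at `p` in a
suitable ratio is balanced horizontally, not proportional to `w p`, and leaves a residual on the
vertical line through `p`. This residual can be moved through an atom of positive deviation on
that line to the horizontal line through that atom. No residual can ever be cancelled, and this
forces `Z = 1` at that atom; symmetrically `Z = 0` at the next one, where a horizontal residual
becomes vertical again. Along the path thus traced the values of `Z` can be shifted without
changing the distribution, so a return to a line already visited would contradict uniqueness.
Hence the path never ends, on a finite support.

Upper out points reduce to lower ones by the reflection `(x, y, μ, ν) ↦ (1 - x, 1 - y, ν, μ)`.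
-/

variable {ι : Type*}

/-- The deviation `f i - X i * (f i + g i)` of a weight pair `w i = (f i, g i)` at the atom `i`:
with `f i + g i` the mass of the atom and `f i` the part of it carried by `Z`, this is the mass by
which `Z` exceeds its prediction `X`. An atom is an out point when its excesses for the two
coordinates have the same strict sign. -/
def excess (X : ι → ℝ) : (ι → ℝ × ℝ) →ₗ[ℝ] ι → ℝ where
  toFun w i := (w i).1 - X i * ((w i).1 + (w i).2)
  map_add' v w := by ext i; simp only [Pi.add_apply, Prod.fst_add, Prod.snd_add]; ring
  map_smul' c w := by
    ext i
    simp only [Pi.smul_apply, Prod.smul_fst, Prod.smul_snd, smul_eq_mul, RingHom.id_apply]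
    ring

theorem excess_apply (X : ι → ℝ) (w : ι → ℝ × ℝ) (i : ι) :
    excess X w i = (w i).1 - X i * ((w i).1 + (w i).2) :=
  rfl

theorem excess_one_sub_swap (X : ι → ℝ) (w : ι → ℝ × ℝ) (i : ι) :
    excess (1 - X) (Prod.swap ∘ w) i = -excess X w i := by
  simp only [excess_apply, Pi.sub_apply, Pi.one_apply, Function.comp_apply, Prod.fst_swap,
    Prod.snd_swap]
  ring

/-- The directions in which both `w + ε • δ` and `w - ε • δ` stay nonnegative for small `ε > 0`. -/
def supportDirections (w : ι → ℝ × ℝ) : Submodule ℝ (ι → ℝ × ℝ) where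
  carrier := {δ | ∀ i, ((w i).1 = 0 → (δ i).1 = 0) ∧ ((w i).2 = 0 → (δ i).2 = 0)}
  add_mem' hδ hε i :=
    ⟨fun h ↦ by simp [(hδ i).1 h, (hε i).1 h], fun h ↦ by simp [(hδ i).2 h, (hε i).2 h]⟩
  zero_mem' := by simp
  smul_mem' c δ hδ i := ⟨fun h ↦ by simp [(hδ i).1 h], fun h ↦ by simp [(hδ i).2 h]⟩

theorem self_mem_supportDirections (w : ι → ℝ × ℝ) : w ∈ supportDirections w :=
  fun _ ↦ ⟨id, id⟩

theorem single_mem_supportDirections [DecidableEq ι] {w : ι → ℝ × ℝ} {i : ι} {b : ℝ × ℝ}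
    (hfst : (w i).1 = 0 → b.1 = 0) (hsnd : (w i).2 = 0 → b.2 = 0) :
    Pi.single i b ∈ supportDirections w := by
  intro j
  obtain rfl | hj := eq_or_ne j i
  · simpa using ⟨hfst, hsnd⟩
  · simp [hj]

theorem swap_comp_mem_supportDirections {w δ : ι → ℝ × ℝ} (hδ : δ ∈ supportDirections w) :
    Prod.swap ∘ δ ∈ supportDirections (Prod.swap ∘ w) :=
  fun i ↦ (hδ i).symm

/-- The directions in which `w + ε • δ` stays nonnegative for small `ε > 0`. -/
def IsFeasible (w δ : ι → ℝ × ℝ) : Prop :=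
  ∀ i, ((w i).1 = 0 → 0 ≤ (δ i).1) ∧ ((w i).2 = 0 → 0 ≤ (δ i).2)

theorem isFeasible_of_mem_supportDirections {w δ : ι → ℝ × ℝ} (hδ : δ ∈ supportDirections w) :
    IsFeasible w δ :=
  fun i ↦ ⟨fun h ↦ ((hδ i).1 h).ge, fun h ↦ ((hδ i).2 h).ge⟩

theorem IsFeasible.add {w δ ε : ι → ℝ × ℝ} (hδ : IsFeasible w δ) (hε : IsFeasible w ε) :
    IsFeasible w (δ + ε) :=
  fun i ↦ ⟨fun h ↦ add_nonneg ((hδ i).1 h) ((hε i).1 h),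
    fun h ↦ add_nonneg ((hδ i).2 h) ((hε i).2 h)⟩

theorem isFeasible_single [DecidableEq ι] {w : ι → ℝ × ℝ} {i : ι} {b : ℝ × ℝ}
    (hfst : (w i).1 = 0 → 0 ≤ b.1) (hsnd : (w i).2 = 0 → 0 ≤ b.2) :
    IsFeasible w (Pi.single i b) := by
  intro j
  obtain rfl | hj := eq_or_ne j i
  · simpa using ⟨hfst, hsnd⟩
  · simp [hj]

theorem eventually_nonneg_add_mul {a b : ℝ} (ha : 0 ≤ a) (hb : a = 0 → 0 ≤ b) :
    ∀ᶠ ε : ℝ in 𝓝[>] 0, 0 ≤ a + ε * b := by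
  obtain ha | rfl := ha.lt_or_eq'
  · have hlim : Tendsto (fun ε : ℝ ↦ a + ε * b) (𝓝[>] 0) (𝓝 (a + 0 * b)) :=
      (Continuous.tendsto (by fun_prop) 0).mono_left nhdsWithin_le_nhds
    exact (hlim.eventually_const_lt (by simpa using ha)).mono fun _ ↦ le_of_lt
  · filter_upwards [self_mem_nhdsWithin] with ε hε
    simpa using mul_nonneg (le_of_lt hε) (hb rfl)

theorem IsFeasible.eventually_nonneg [Finite ι] {w δ : ι → ℝ × ℝ} (hδ : IsFeasible w δ)
    (hw : 0 ≤ w) : ∀ᶠ ε : ℝ in 𝓝[>] 0, 0 ≤ w + ε • δ := by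
  have hpoint (i : ι) : ∀ᶠ ε : ℝ in 𝓝[>] 0, 0 ≤ (w + ε • δ) i :=
    (eventually_nonneg_add_mul (hw i).1 (hδ i).1).and
      (eventually_nonneg_add_mul (hw i).2 (hδ i).2)
  exact eventually_all.2 hpoint

section Fintype

variable [Fintype ι]

/-- The total excess over each fibre of `X`. It vanishes identically exactly when `X` is the
conditional expectation of `Z` given `X`. -/
noncomputable def fiberExcess (X : ι → ℝ) : (ι → ℝ × ℝ) →ₗ[ℝ] ℝ → ℝ where
  toFun w x := ∑ i with X i = x, excess X w i
  map_add' v w := by ext x; simp [Finset.sum_add_distrib]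
  map_smul' c w := by ext x; simp [Finset.mul_sum]

theorem fiberExcess_apply (X : ι → ℝ) (w : ι → ℝ × ℝ) (x : ℝ) :
    fiberExcess X w x = ∑ i with X i = x, excess X w i :=
  rfl

theorem fiberExcess_single [DecidableEq ι] (X : ι → ℝ) (t : ι) (b : ℝ × ℝ) :
    fiberExcess X (Pi.single t b) = Pi.single (X t) (b.1 - X t * (b.1 + b.2)) := by
  ext x
  rw [fiberExcess_apply, Finset.sum_filter, Finset.sum_eq_single t]
  · simp [excess_apply, Pi.single_apply, eq_comm]
  · intro i _ hi
    simp [excess_apply, hi]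
  · simp

theorem fiberExcess_one_sub_swap (X : ι → ℝ) (w : ι → ℝ × ℝ) (x : ℝ) :
    fiberExcess (1 - X) (Prod.swap ∘ w) x = -fiberExcess X w (1 - x) := by
  simp only [fiberExcess_apply, excess_one_sub_swap, Finset.sum_neg_distrib, Pi.sub_apply,
    Pi.one_apply, eq_sub_iff_add_eq, add_comm, eq_comm]

theorem fiberExcess_one_sub_swap_eq_zero {X : ι → ℝ} {w : ι → ℝ × ℝ} (h : fiberExcess X w = 0) :
    fiberExcess (1 - X) (Prod.swap ∘ w) = 0 := by
  ext x
  simp [fiberExcess_one_sub_swap, h]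

theorem exists_excess_pos {X : ι → ℝ} {w : ι → ℝ × ℝ} {u : ι} (h : fiberExcess X w (X u) = 0)
    (hu : excess X w u < 0) : ∃ t, X t = X u ∧ 0 < excess X w t := by
  obtain ⟨t, ht, hpos⟩ :=
    Finset.exists_pos_of_sum_zero_of_exists_nonzero _ h ⟨u, by simp, hu.ne⟩
  exact ⟨t, by simpa using ht, hpos⟩

theorem fiberExcess_apply_zero_of_mem_supportDirections {X : ι → ℝ} {w δ : ι → ℝ × ℝ}
    (hw : 0 ≤ w) (h : fiberExcess X w 0 = 0) (hδ : δ ∈ supportDirections w) :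
    fiberExcess X δ 0 = 0 := by
  have hexcess (v : ι → ℝ × ℝ) (i : ι) (hi : X i = 0) : excess X v i = (v i).1 := by
    simp [excess_apply, hi]
  have hfst (i : ι) (hi : X i = 0) : (w i).1 = 0 := by
    rw [← hexcess w i hi]
    refine (Finset.sum_eq_zero_iff_of_nonneg fun j hj ↦ ?_).1 h i (by simpa using hi)
    rw [hexcess w j (by simpa using hj)]
    exact (hw j).1
  refine Finset.sum_eq_zero fun i hi ↦ ?_
  have hi : X i = 0 := by simpa using hi
  rw [hexcess δ i hi, (hδ i).1 (hfst i hi)]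

theorem nonneg_of_fiberExcess_eq_zero {X : ι → ℝ} {w : ι → ℝ × ℝ} (hw : 0 ≤ w)
    (h : fiberExcess X w = 0) {i : ι} (hi : 0 < (w i).1 + (w i).2) : 0 ≤ X i := by
  by_contra! hneg
  have hexcess (j : ι) (hj : j ∈ Finset.univ.filter (X · = X i)) :
      -X i * ((w j).1 + (w j).2) ≤ excess X w j := by
    have hX : X j = X i := by simpa using hj
    have hfst : 0 ≤ (w j).1 := (hw j).1
    rw [excess_apply, hX]
    linarith
  have hpos : 0 < fiberExcess X w (X i) :=
    Finset.sum_pos' (fun j hj ↦ (mul_nonneg (by linarith) (add_nonneg (hw j).1 (hw j).2)).trans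
      (hexcess j hj)) ⟨i, by simp, (mul_pos (by linarith) hi).trans_le (hexcess i (by simp))⟩
  exact hpos.ne' (congrFun h _)

theorem le_one_of_fiberExcess_eq_zero {X : ι → ℝ} {w : ι → ℝ × ℝ} (hw : 0 ≤ w)
    (h : fiberExcess X w = 0) {i : ι} (hi : 0 < (w i).1 + (w i).2) : X i ≤ 1 :=
  sub_nonneg.1 <| nonneg_of_fiberExcess_eq_zero (X := 1 - X) (fun j ↦ ⟨(hw j).2, (hw j).1⟩)
    (fiberExcess_one_sub_swap_eq_zero h) (add_comm (w i).1 (w i).2 ▸ hi)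

/-- The weights `w i = (f i, g i)` on atoms with coordinates `(X i, Y i)` represent a coherent
distribution: `f` and `g` are the point masses of a pair of `R` whose sum is a probability
measure. -/
structure IsRepresentation (X Y : ι → ℝ) (w : ι → ℝ × ℝ) : Prop where
  nonneg : 0 ≤ w
  fiberExcess_left : fiberExcess X w = 0
  fiberExcess_right : fiberExcess Y w = 0
  sum_eq_one : ∑ i, ((w i).1 + (w i).2) = 1

/-- A representation with everywhere positive total mass of an extreme coherent distribution, which
has no other representation. Both properties are expressed by `eq_of_midpoint`, where `v = w`
amounts to uniqueness and `u = v` to extremality up to uniqueness. -/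
structure IsExtremeRepresentation (X Y : ι → ℝ) (w : ι → ℝ × ℝ) : Prop
    extends IsRepresentation X Y w where
  pos : ∀ i, 0 < (w i).1 + (w i).2
  eq_of_midpoint : ∀ u v, IsRepresentation X Y u → IsRepresentation X Y v →
    (∀ i, (u i).1 + (u i).2 + ((v i).1 + (v i).2) = 2 * ((w i).1 + (w i).2)) → u = w

variable {X Y : ι → ℝ} {w δ : ι → ℝ × ℝ}

theorem IsRepresentation.symm (hw : IsRepresentation X Y w) : IsRepresentation Y X w :=
  ⟨hw.nonneg, hw.fiberExcess_right, hw.fiberExcess_left, hw.sum_eq_one⟩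

theorem IsRepresentation.one_sub_swap (hw : IsRepresentation X Y w) :
    IsRepresentation (1 - X) (1 - Y) (Prod.swap ∘ w) where
  nonneg i := ⟨(hw.nonneg i).2, (hw.nonneg i).1⟩
  fiberExcess_left := fiberExcess_one_sub_swap_eq_zero hw.fiberExcess_left
  fiberExcess_right := fiberExcess_one_sub_swap_eq_zero hw.fiberExcess_right
  sum_eq_one := by simpa [add_comm] using hw.sum_eq_one

theorem IsRepresentation.add_smul (hw : IsRepresentation X Y w) {ε : ℝ} (hnonneg : 0 ≤ w + ε • δ)
    (hX : fiberExcess X δ = 0) (hY : fiberExcess Y δ = 0)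
    (hsum : ∑ i, ((δ i).1 + (δ i).2) = 0) : IsRepresentation X Y (w + ε • δ) where
  nonneg := hnonneg
  fiberExcess_left := by simp [hw.fiberExcess_left, hX]
  fiberExcess_right := by simp [hw.fiberExcess_right, hY]
  sum_eq_one := by
    calc ∑ i, (((w + ε • δ) i).1 + ((w + ε • δ) i).2)
        = ∑ i, ((w i).1 + (w i).2) + ε * ∑ i, ((δ i).1 + (δ i).2) := by
          rw [Finset.mul_sum, ← Finset.sum_add_distrib]
          refine Finset.sum_congr rfl fun i _ ↦ ?_
          simp only [Pi.add_apply, Pi.smul_apply, Prod.fst_add, Prod.snd_add, Prod.smul_fst,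
            Prod.smul_snd, smul_eq_mul]
          ring
      _ = 1 := by rw [hw.sum_eq_one, hsum, mul_zero, add_zero]

namespace IsExtremeRepresentation

theorem symm (hw : IsExtremeRepresentation X Y w) : IsExtremeRepresentation Y X w where
  toIsRepresentation := hw.toIsRepresentation.symm
  pos := hw.pos
  eq_of_midpoint u v hu hv := hw.eq_of_midpoint u v hu.symm hv.symm

theorem one_sub_swap (hw : IsExtremeRepresentation X Y w) :
    IsExtremeRepresentation (1 - X) (1 - Y) (Prod.swap ∘ w) where
  toIsRepresentation := hw.toIsRepresentation.one_sub_swap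
  pos i := add_comm (w i).1 (w i).2 ▸ hw.pos i
  eq_of_midpoint u v hu hv huv := by
    have hswap : Prod.swap ∘ u = w :=
      hw.eq_of_midpoint (Prod.swap ∘ u) (Prod.swap ∘ v)
        (by simpa using hu.one_sub_swap) (by simpa using hv.one_sub_swap)
        fun i ↦ by simpa [add_comm] using huv i
    ext i <;> simp [← hswap]

theorem nonneg_left (hw : IsExtremeRepresentation X Y w) (i : ι) : 0 ≤ X i :=
  nonneg_of_fiberExcess_eq_zero hw.nonneg hw.fiberExcess_left (hw.pos i)

theorem le_one_left (hw : IsExtremeRepresentation X Y w) (i : ι) : X i ≤ 1 :=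
  le_one_of_fiberExcess_eq_zero hw.nonneg hw.fiberExcess_left (hw.pos i)

theorem eq_zero_of_isFeasible (hw : IsExtremeRepresentation X Y w) (hδ : IsFeasible w δ)
    (htotal : ∀ i, (δ i).1 + (δ i).2 = 0) (hX : fiberExcess X δ = 0) (hY : fiberExcess Y δ = 0) :
    δ = 0 := by
  obtain ⟨ε, hnonneg, hε⟩ := ((hδ.eventually_nonneg hw.nonneg).and self_mem_nhdsWithin).exists
  have hfix : w + ε • δ = w := by
    refine hw.eq_of_midpoint _ w
      (hw.toIsRepresentation.add_smul hnonneg hX hY (Finset.sum_eq_zero fun i _ ↦ htotal i))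
      hw.toIsRepresentation fun i ↦ ?_
    simp only [Pi.add_apply, Pi.smul_apply, Prod.fst_add, Prod.snd_add, Prod.smul_fst,
      Prod.smul_snd, smul_eq_mul]
    linear_combination ε * htotal i
  exact (smul_eq_zero.1 (add_eq_left.1 hfix)).resolve_left (ne_of_gt hε)

theorem eq_zero_of_sum_eq_zero (hw : IsExtremeRepresentation X Y w)
    (hδ : δ ∈ supportDirections w) (hX : fiberExcess X δ = 0) (hY : fiberExcess Y δ = 0)
    (hsum : ∑ i, ((δ i).1 + (δ i).2) = 0) : δ = 0 := by
  obtain ⟨ε, ⟨hadd, hsub⟩, hε⟩ :=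
    ((((isFeasible_of_mem_supportDirections hδ).eventually_nonneg hw.nonneg).and
      ((isFeasible_of_mem_supportDirections (neg_mem hδ)).eventually_nonneg hw.nonneg)).and
      self_mem_nhdsWithin).exists
  have hfix : w + ε • δ = w := by
    refine hw.eq_of_midpoint _ (w + ε • -δ) (hw.toIsRepresentation.add_smul hadd hX hY hsum)
      (hw.toIsRepresentation.add_smul hsub (by simp [hX]) (by simp [hY]) ?_) fun i ↦ ?_
    · simpa only [Pi.neg_apply, Prod.fst_neg, Prod.snd_neg, ← neg_add, Finset.sum_neg_distrib,
        neg_eq_zero] using hsum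
    · simp only [Pi.add_apply, Pi.smul_apply, Pi.neg_apply, Prod.fst_add, Prod.snd_add,
        Prod.smul_fst, Prod.smul_snd, Prod.fst_neg, Prod.snd_neg, smul_eq_mul]
      ring
  exact (smul_eq_zero.1 (add_eq_left.1 hfix)).resolve_left (ne_of_gt hε)

theorem exists_eq_smul (hw : IsExtremeRepresentation X Y w) (hδ : δ ∈ supportDirections w)
    (hX : fiberExcess X δ = 0) (hY : fiberExcess Y δ = 0) : ∃ c : ℝ, δ = c • w := by
  set c : ℝ := ∑ i, ((δ i).1 + (δ i).2) with hc
  refine ⟨c, sub_eq_zero.1 <| hw.eq_zero_of_sum_eq_zero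
    (sub_mem hδ <| (supportDirections w).smul_mem c <| self_mem_supportDirections w)
    (by simp [hX, hw.fiberExcess_left]) (by simp [hY, hw.fiberExcess_right]) ?_⟩
  calc ∑ i, (((δ - c • w) i).1 + ((δ - c • w) i).2)
      = ∑ i, ((δ i).1 + (δ i).2) - c * ∑ i, ((w i).1 + (w i).2) := by
        rw [Finset.mul_sum, ← Finset.sum_sub_distrib]
        refine Finset.sum_congr rfl fun i _ ↦ ?_
        simp only [Pi.sub_apply, Pi.smul_apply, Prod.fst_sub, Prod.snd_sub, Prod.smul_fst,
          Prod.smul_snd, smul_eq_mul]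
        ring
    _ = 0 := by rw [hw.sum_eq_one, ← hc, mul_one, sub_self]

theorem mul_eq_mul_of_fiberExcess_eq_zero (hw : IsExtremeRepresentation X Y w)
    (hδ : δ ∈ supportDirections w) (hX : fiberExcess X δ = 0) (hY : fiberExcess Y δ = 0) (i : ι) :
    (δ i).1 * (w i).2 = (δ i).2 * (w i).1 := by
  obtain ⟨c, rfl⟩ := hw.exists_eq_smul hδ hX hY
  simp only [Pi.smul_apply, Prod.smul_fst, Prod.smul_snd, smul_eq_mul]
  ring

-- At an interior atom on the diagonal, adding mass in the ratio `Y : 1 - Y` is balanced in both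
-- coordinates, but it is not proportional to `w` as soon as there is a second atom.
theorem left_ne_right (hw : IsExtremeRepresentation X Y w) {p t : ι} (htp : t ≠ p)
    (hfst : (w t).1 ≠ 0) (hsnd : (w t).2 ≠ 0) : X t ≠ Y t := by
  classical
  intro hXY
  obtain ⟨c, hc⟩ := hw.exists_eq_smul
    (single_mem_supportDirections (i := t) (b := (Y t, 1 - Y t)) (absurd · hfst) (absurd · hsnd))
    (by simp [fiberExcess_single, hXY]) (by simp [fiberExcess_single])
  have hp : 0 = c • w p := by simpa [htp.symm] using congrFun hc p
  have hc0 : c = 0 := by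
    refine (smul_eq_zero.1 hp.symm).resolve_right fun h ↦ (hw.pos p).ne' ?_
    simp [h]
  have ht : (Y t, 1 - Y t) = (0 : ℝ × ℝ) := by simpa [hc0] using congrFun hc t
  have hY : Y t = 0 := congrArg Prod.fst ht
  have hY' : 1 - Y t = 0 := congrArg Prod.snd ht
  linarith

end IsExtremeRepresentation

/-- Shifting the values of `Z` along an alternating path moves a unit of excess from the fibre
`Y = d` to the fibre `Y = c`, without changing the distribution nor the fibres of `X`. The last
condition, that some atom on which `Z = 1` takes part, makes the relation irreflexive. -/
def CanTransfer (X Y : ι → ℝ) (w : ι → ℝ × ℝ) (c d : ℝ) : Prop :=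
  ∃ δ, IsFeasible w δ ∧ (∀ i, (δ i).1 + (δ i).2 = 0) ∧ fiberExcess X δ = 0 ∧
    fiberExcess Y δ = Pi.single c 1 - Pi.single d 1 ∧ ∃ i, (w i).2 = 0 ∧ 0 < (δ i).2

theorem CanTransfer.trans {a b c : ℝ} (hab : CanTransfer X Y w a b)
    (hbc : CanTransfer X Y w b c) : CanTransfer X Y w a c := by
  obtain ⟨δ, hδ, hδtotal, hδX, hδY, i, hi, hδi⟩ := hab
  obtain ⟨ε, hε, hεtotal, hεX, hεY, -⟩ := hbc
  refine ⟨δ + ε, hδ.add hε, fun j ↦ ?_, by simp [hδX, hεX], by simp [hδY, hεY], i, hi,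
    add_pos_of_pos_of_nonneg hδi ((hε i).2 hi)⟩
  simp only [Pi.add_apply, Prod.fst_add, Prod.snd_add]
  linear_combination hδtotal j + hεtotal j

theorem IsExtremeRepresentation.not_canTransfer_self (hw : IsExtremeRepresentation X Y w) (c : ℝ) :
    ¬CanTransfer X Y w c c := by
  rintro ⟨δ, hδ, htotal, hX, hY, i, -, hi⟩
  rw [hw.eq_zero_of_isFeasible hδ htotal hX (by simpa using hY)] at hi
  exact hi.false

theorem canTransfer_of_left_eq {u t : ι} (hX : X t = X u) (hu : (w u).2 ≠ 0)
    (ht : (w t).1 ≠ 0) (ht' : (w t).2 = 0) : CanTransfer X Y w (Y u) (Y t) := by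
  classical
  have hut : t ≠ u := by rintro rfl; exact hu ht'
  refine ⟨Pi.single u (1, -1) + Pi.single t (-1, 1),
    (isFeasible_single (fun _ ↦ zero_le_one) (absurd · hu)).add
      (isFeasible_single (absurd · ht) fun _ ↦ zero_le_one), fun i ↦ ?_, ?_, ?_, t, ht', ?_⟩
  · simp only [Pi.add_apply, Pi.single_apply]
    split_ifs <;> simp
  · simp [fiberExcess_single, hX, ← Pi.single_add]
  · simp [fiberExcess_single, sub_eq_add_neg, Pi.single_neg]
  · simp [hut]

/-- Some direction with the value `a` at `p` keeps all fibres of `Y` balanced, and all fibres of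
`X` except possibly the one over `x`. -/
def HasResidual (X Y : ι → ℝ) (w : ι → ℝ × ℝ) (p : ι) (a : ℝ × ℝ) (x : ℝ) : Prop :=
  ∃ δ ∈ supportDirections w, δ p = a ∧ (∃ e, fiberExcess X δ = Pi.single x e) ∧
    fiberExcess Y δ = 0

section Residual

variable {p t u : ι} {a : ℝ × ℝ} {x : ℝ}

theorem HasResidual.one_sub_swap (h : HasResidual X Y w p a x) :
    HasResidual (1 - X) (1 - Y) (Prod.swap ∘ w) p a.swap (1 - x) := by
  obtain ⟨δ, hδ, rfl, ⟨e, he⟩, hY⟩ := h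
  refine ⟨Prod.swap ∘ δ, swap_comp_mem_supportDirections hδ, rfl, ⟨-e, ?_⟩,
    fiberExcess_one_sub_swap_eq_zero hY⟩
  ext y
  rw [fiberExcess_one_sub_swap, he]
  by_cases hy : y = 1 - x
  · simp [hy]
  · have hx : 1 - y ≠ x := fun h ↦ hy (by linarith)
    simp [hy, hx]

-- Subtracting from the direction a multiple of `b` at `t` moves the residual to the fibre of `Y`.
theorem HasResidual.exists_push [DecidableEq ι] (h : HasResidual X Y w p a (X t)) (htp : t ≠ p)
    {b : ℝ × ℝ} (hb : Pi.single t b ∈ supportDirections w) (hbX : b.1 - X t * (b.1 + b.2) ≠ 0) :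
    ∃ δ ∈ supportDirections w, δ p = a ∧ fiberExcess X δ = 0 ∧
      ∃ c : ℝ, fiberExcess Y δ = Pi.single (Y t) (c * (b.1 - Y t * (b.1 + b.2))) := by
  obtain ⟨δ, hδ, rfl, ⟨e, he⟩, hY⟩ := h
  set r : ℝ := e / (b.1 - X t * (b.1 + b.2)) with hr
  refine ⟨δ - r • Pi.single t b, sub_mem hδ (Submodule.smul_mem _ r hb), by simp [htp.symm], ?_,
    -r, ?_⟩
  · rw [map_sub, map_smul, fiberExcess_single, he, ← Pi.single_smul, smul_eq_mul, hr,
      div_mul_cancel₀ _ hbX, sub_self]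
  · rw [map_sub, map_smul, fiberExcess_single, hY, ← Pi.single_smul, smul_eq_mul, zero_sub,
      ← Pi.single_neg, neg_mul]

variable (hw : IsExtremeRepresentation X Y w) (ha : a.1 * (w p).2 ≠ a.2 * (w p).1)
include hw ha

theorem HasResidual.ne_zero (h : HasResidual X Y w p a x) : x ≠ 0 := by
  rintro rfl
  obtain ⟨δ, hδ, rfl, ⟨e, he⟩, hY⟩ := h
  have he0 : e = 0 := by
    simpa [he] using fiberExcess_apply_zero_of_mem_supportDirections hw.nonneg
      (congrFun hw.fiberExcess_left 0) hδ
  exact ha (hw.mul_eq_mul_of_fiberExcess_eq_zero hδ (by simp [he, he0]) hY p)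

theorem HasResidual.snd_eq_zero (h : HasResidual X Y w p a (X t)) (htp : t ≠ p)
    (ht : (w t).1 ≠ 0) : (w t).2 = 0 := by
  classical
  by_contra ht'
  have hXY : X t ≠ Y t := hw.left_ne_right htp ht ht'
  obtain ⟨δ, hδ, rfl, hX, c, hY⟩ := h.exists_push (b := (Y t, 1 - Y t)) htp
    (single_mem_supportDirections (absurd · ht) (absurd · ht'))
    (by simpa [sub_eq_zero] using hXY.symm)
  exact ha (hw.mul_eq_mul_of_fiberExcess_eq_zero hδ hX (by simpa using hY) p)

theorem HasResidual.exists_next (h : HasResidual X Y w p a (X u))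
    (hu : excess X w u < 0 ∨ (w u).1 = 0) (hp : ∀ t, X t = X u → 0 < excess X w t → t ≠ p) :
    ∃ t, X t = X u ∧ (w t).1 ≠ 0 ∧ (w t).2 = 0 ∧ HasResidual Y X w p a (Y t) := by
  classical
  have hneg : excess X w u < 0 := by
    refine hu.elim id fun hu ↦ ?_
    have hXu : 0 < X u := (hw.nonneg_left u).lt_of_ne' (h.ne_zero hw ha)
    rw [excess_apply, hu, zero_sub, neg_lt_zero]
    exact mul_pos hXu (hu ▸ hw.pos u)
  obtain ⟨t, htu, ht⟩ := exists_excess_pos (congrFun hw.fiberExcess_left _) hneg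
  have htp : t ≠ p := hp t htu ht
  have hfst : (w t).1 ≠ 0 := by
    intro hzero
    have hnonpos : excess X w t ≤ 0 := by
      rw [excess_apply, hzero, zero_sub, neg_nonpos]
      exact mul_nonneg (hw.nonneg_left t) (hzero ▸ (hw.pos t).le)
    exact hnonpos.not_gt ht
  rw [← htu] at h
  have hsnd : (w t).2 = 0 := h.snd_eq_zero hw ha htp hfst
  have hX1 : 1 - X t ≠ 0 := by
    intro hX1
    rw [excess_apply, hsnd, add_zero, ← one_sub_mul, hX1, zero_mul] at ht
    exact ht.false
  obtain ⟨δ, hδ, hδp, hδX, c, hδY⟩ := h.exists_push (b := (1, 0)) htp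
    (single_mem_supportDirections (absurd · hfst) fun _ ↦ rfl) (by simpa using hX1)
  exact ⟨t, htu, hfst, hsnd, δ, hδ, hδp, ⟨_, hδY⟩, hδX⟩

end Residual

namespace IsExtremeRepresentation

-- Following the residual alternately along fibres of `X` and of `Y` moves strictly up in the order
-- `CanTransfer`, so it cannot go on forever.
theorem not_hasResidual (hw : IsExtremeRepresentation X Y w) {p : ι} {a : ℝ × ℝ}
    (ha : a.1 * (w p).2 ≠ a.2 * (w p).1) (hpX : excess X w p < 0) (hpY : excess Y w p < 0)
    (hp : (w p).2 ≠ 0) : ¬HasResidual X Y w p a (X p) := by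
  let r (v u : ι) : Prop := CanTransfer X Y w (Y u) (Y v)
  have : IsTrans ι r := ⟨fun _ _ _ hba hcb ↦ hcb.trans hba⟩
  have : Std.Irrefl r := ⟨fun u ↦ hw.not_canTransfer_self (Y u)⟩
  suffices ∀ u, (u = p ∨ (w u).1 = 0 ∧ r u p) → ¬HasResidual X Y w p a (X u) from
    this p (.inl rfl)
  intro u
  induction u using (Finite.wellFounded_of_trans_of_irrefl r).induction with
  | _ u ih =>
  intro hu hres
  have hsnd : (w u).2 ≠ 0 := by
    rcases hu with rfl | ⟨hu, -⟩
    · exact hp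
    · simpa [hu] using (hw.pos u).ne'
  obtain ⟨t, htu, ht, ht', hrest⟩ := hres.exists_next hw ha
    (hu.imp (fun h ↦ by rwa [h]) And.left) fun t _ hpos htp ↦ hpX.not_gt (by rwa [htp] at hpos)
  have hrtu : r t u := canTransfer_of_left_eq htu hsnd ht ht'
  have hrtp : r t p := hu.elim (· ▸ hrtu) fun hu ↦ hu.2.trans hrtu
  obtain ⟨v, hvt, -, hv, hresv⟩ :=
    hrest.one_sub_swap.exists_next hw.symm.one_sub_swap (u := t) (a := a.swap) (p := p)
      (fun h ↦ ha h.symm) (.inr ht') fun v hvt _ hvp ↦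
        hw.not_canTransfer_self (Y p) (by simpa [r, ← hvp, sub_right_inj.1 hvt] using hrtp)
  have hYvt : Y v = Y t := sub_right_inj.1 hvt
  have hr (s : ι) (hs : r t s) : r v s := by simpa only [r, hYvt] using hs
  exact ih v (hr u hrtu) (.inr ⟨hv, hr p hrtp⟩) (by
    simpa [← Function.comp_assoc] using hresv.one_sub_swap)

theorem fst_eq_zero_of_excess_neg (hw : IsExtremeRepresentation X Y w) {p : ι}
    (hX : excess X w p < 0) (hY : excess Y w p < 0) : (w p).1 = 0 := by
  classical
  by_contra hfst
  have hsnd : (w p).2 ≠ 0 := by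
    intro hzero
    have hnonneg : 0 ≤ excess X w p := by
      rw [excess_apply, hzero, add_zero, ← one_sub_mul]
      exact mul_nonneg (sub_nonneg.2 (hw.le_one_left p)) (hw.nonneg p).1
    exact hnonneg.not_gt hX
  -- Mass in the ratio `Y p : 1 - Y p` at `p` is balanced for `Y`, but not proportional to `w p`.
  refine hw.not_hasResidual (a := (Y p, 1 - Y p)) (fun h ↦ hY.ne ?_) hX hY hsnd
    ⟨Pi.single p (Y p, 1 - Y p),
      single_mem_supportDirections (absurd · hfst) (absurd · hsnd), by simp,
      ⟨_, fiberExcess_single X p _⟩, by simp [fiberExcess_single]⟩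
  rw [excess_apply]
  linear_combination -h

theorem snd_eq_zero_of_excess_pos (hw : IsExtremeRepresentation X Y w) {p : ι}
    (hX : 0 < excess X w p) (hY : 0 < excess Y w p) : (w p).2 = 0 :=
  hw.one_sub_swap.fst_eq_zero_of_excess_neg (p := p)
    (by simpa [excess_one_sub_swap] using hX) (by simpa [excess_one_sub_swap] using hY)

end IsExtremeRepresentation

end Fintype

section Atomic

variable {α β : Type*} [MeasurableSpace α] [MeasurableSpace β]

/-- The measure with mass `m i` at the point `z i`; negative masses count as `0`. -/
noncomputable def atomic (z : ι → α) (m : ι → ℝ) : Measure α :=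
  Measure.sum fun i ↦ ENNReal.ofReal (m i) • Measure.dirac (z i)

theorem map_atomic {φ : α → β} (hφ : Measurable φ) (z : ι → α) (m : ι → ℝ) :
    (atomic z m).map φ = atomic (φ ∘ z) m := by
  simp only [atomic, Measure.map_sum hφ.aemeasurable, Measure.map_smul, Measure.map_dirac' hφ,
    Function.comp_apply]

theorem atomic_add (z : ι → α) {m n : ι → ℝ} (hm : 0 ≤ m) (hn : 0 ≤ n) :
    atomic z (m + n) = atomic z m + atomic z n := by
  simp only [atomic, Measure.sum_add_sum, Pi.add_apply, ENNReal.ofReal_add (hm _) (hn _), add_smul]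

theorem atomic_smul (z : ι → α) (m : ι → ℝ) (c : NNReal) :
    atomic z (c • m) = (c : ENNReal) • atomic z m := by
  ext A hA
  simp only [atomic, Measure.sum_apply _ hA, Measure.smul_apply, smul_eq_mul, Pi.smul_apply,
    NNReal.smul_def, ENNReal.ofReal_mul c.coe_nonneg, ENNReal.ofReal_coe_nnreal, mul_assoc,
    ENNReal.tsum_mul_left]

instance isFiniteMeasure_atomic [Finite ι] (z : ι → α) (m : ι → ℝ) :
    IsFiniteMeasure (atomic z m) := by
  have := Fintype.ofFinite ι
  exact ⟨by simp [atomic, ENNReal.sum_lt_top]⟩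

theorem isProbabilityMeasure_atomic_iff [Fintype ι] {z : ι → α} {m : ι → ℝ} (hm : 0 ≤ m) :
    IsProbabilityMeasure (atomic z m) ↔ ∑ i, m i = 1 := by
  simp [isProbabilityMeasure_iff, atomic, ← ENNReal.ofReal_sum_of_nonneg fun i _ ↦ hm i]

variable [MeasurableSingletonClass α]

theorem atomic_apply_singleton {z : ι → α} (hz : z.Injective) (m : ι → ℝ) (i : ι) :
    atomic z m {z i} = ENNReal.ofReal (m i) := by
  rw [atomic, Measure.sum_apply _ (measurableSet_singleton _), tsum_eq_single i]
  · simp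
  · intro j hj
    simp [hz.ne hj]

theorem eq_of_atomic_eq {z : ι → α} (hz : z.Injective) {m n : ι → ℝ} (hm : 0 ≤ m) (hn : 0 ≤ n)
    (h : atomic z m = atomic z n) : m = n := by
  ext i
  rw [← ENNReal.ofReal_eq_ofReal_iff (hm i) (hn i), ← atomic_apply_singleton hz, h,
    atomic_apply_singleton hz]

theorem eq_atomic_of_measure_compl_eq_zero {μ : Measure α} [IsFiniteMeasure μ] {S : Finset α}
    (h : μ (↑S)ᶜ = 0) : μ = atomic (Subtype.val : S → α) fun s ↦ μ.real {s.1} := by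
  have hsum : μ = ∑ a ∈ S, μ {a} • Measure.dirac a :=
    Measure.ae_mem_finset_iff.1 (mem_ae_iff.2 h)
  rw [atomic, Measure.sum_fintype, Finset.sum_coe_sort S fun a ↦
    ENNReal.ofReal (μ.real {a}) • Measure.dirac a]
  simpa only [ofReal_measureReal (measure_ne_top μ _)] using hsum

variable [Fintype ι]

theorem integral_atomic (z : ι → α) {m : ι → ℝ} (hm : 0 ≤ m) (h : α → ℝ) :
    ∫ a, h a ∂atomic z m = ∑ i, m i * h (z i) := by
  simp only [atomic, integral_sum_dirac fun _ ↦ ENNReal.ofReal_ne_top, tsum_fintype, smul_eq_mul,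
    ENNReal.toReal_ofReal (hm _)]

open Classical in
theorem setIntegral_atomic (z : ι → α) {m : ι → ℝ} (hm : 0 ≤ m) (h : α → ℝ) {A : Set α}
    (hA : MeasurableSet A) : ∫ a in A, h a ∂atomic z m = ∑ i with z i ∈ A, m i * h (z i) := by
  simp only [← integral_indicator hA, integral_atomic z hm, Set.indicator_apply, mul_ite, mul_zero,
    Finset.sum_filter]

end Atomic

section Coherent

variable {X Y : ι → ℝ} {w : ι → ℝ × ℝ}

theorem fst_comp_nonneg (hw : 0 ≤ w) : 0 ≤ Prod.fst ∘ w := fun i ↦ (hw i).1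

theorem snd_comp_nonneg (hw : 0 ≤ w) : 0 ≤ Prod.snd ∘ w := fun i ↦ (hw i).2

theorem fst_comp_add_snd_comp_nonneg (hw : 0 ≤ w) : 0 ≤ Prod.fst ∘ w + Prod.snd ∘ w :=
  add_nonneg (fst_comp_nonneg hw) (snd_comp_nonneg hw)

variable [Fintype ι]

open Classical in
theorem fiberExcess_eq_zero_iff : fiberExcess X w = 0 ↔
    ∀ A : Set ℝ, MeasurableSet A → ∑ i with X i ∈ A, excess X w i = 0 := by
  refine ⟨fun h A _ ↦ ?_, fun h ↦ funext fun x ↦ by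
    simpa [fiberExcess_apply] using h {x} (measurableSet_singleton x)⟩
  rw [← Finset.sum_fiberwise_of_maps_to fun i hi ↦ Finset.mem_image_of_mem X hi]
  refine Finset.sum_eq_zero fun x hx ↦ ?_
  obtain ⟨j, hj, rfl⟩ := Finset.mem_image.1 hx
  rw [Finset.filter_filter]
  refine Eq.trans (Finset.sum_congr (Finset.filter_congr fun i _ ↦
    and_iff_right_of_imp fun hi ↦ ?_) fun _ _ ↦ rfl) (congrFun h (X j))
  simpa [hi] using hj

theorem fiberExcess_eq_zero_iff_setIntegral_eq (hw : 0 ≤ w) : fiberExcess X w = 0 ↔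
    ∀ A : Set ℝ, MeasurableSet A →
      ∫ x in A, (1 - x) ∂atomic X (Prod.fst ∘ w) = ∫ x in A, x ∂atomic X (Prod.snd ∘ w) := by
  classical
  rw [fiberExcess_eq_zero_iff]
  refine forall₂_congr fun A hA ↦ ?_
  rw [setIntegral_atomic X (fst_comp_nonneg hw) _ hA,
    setIntegral_atomic X (snd_comp_nonneg hw) _ hA,
    ← sub_eq_zero (b := Finset.sum _ fun i ↦ (Prod.snd ∘ w) i * _), ← Finset.sum_sub_distrib]
  refine Eq.congr_left (Finset.sum_congr rfl fun i _ ↦ ?_)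
  rw [excess_apply, Function.comp_apply, Function.comp_apply]
  ring

theorem memR_atomic_iff {z : ι → ℝ × ℝ} (hw : 0 ≤ w) :
    MemR (atomic z (Prod.fst ∘ w)) (atomic z (Prod.snd ∘ w)) ↔
      fiberExcess (Prod.fst ∘ z) w = 0 ∧ fiberExcess (Prod.snd ∘ z) w = 0 := by
  simp only [MemR, map_atomic measurable_fst, map_atomic measurable_snd,
    fiberExcess_eq_zero_iff_setIntegral_eq hw, ← forall_and]

theorem ae_eq_condExp_of_fiberExcess_eq_zero [MeasurableSpace ι] [DiscreteMeasurableSpace ι]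
    (hw : 0 ≤ w) (h : fiberExcess X w = 0) :
    X =ᵐ[atomic id (Prod.fst ∘ w + Prod.snd ∘ w)]
      (atomic id (Prod.fst ∘ w + Prod.snd ∘ w))[fun i ↦ (w i).1 / ((w i).1 + (w i).2) |
        MeasurableSpace.comap X (borel ℝ)] := by
  classical
  have hX : Measurable[MeasurableSpace.comap X (borel ℝ)] X := by
    rw [← BorelSpace.measurable_eq (α := ℝ)]
    exact comap_measurable X
  refine ae_eq_condExp_of_forall_setIntegral_eq (fun _ _ ↦ .of_discrete) .of_finite
    (fun _ _ _ ↦ Integrable.of_finite.integrableOn) ?_ hX.aestronglyMeasurable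
  rintro _ ⟨A, hA, rfl⟩ -
  have htotal : 0 ≤ Prod.fst ∘ w + Prod.snd ∘ w := fst_comp_add_snd_comp_nonneg hw
  rw [setIntegral_atomic _ htotal _ .of_discrete, setIntegral_atomic _ htotal _ .of_discrete,
    ← sub_eq_zero, ← neg_eq_zero, neg_sub, ← Finset.sum_sub_distrib]
  refine Eq.trans (Finset.sum_congr rfl fun i _ ↦ ?_)
    (fiberExcess_eq_zero_iff.1 h A (BorelSpace.measurable_eq (α := ℝ) ▸ hA))
  have hcancel : ((w i).1 + (w i).2) * ((w i).1 / ((w i).1 + (w i).2)) = (w i).1 :=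
    mul_div_cancel_of_imp' fun h0 ↦ ((add_eq_zero_iff_of_nonneg (hw i).1 (hw i).2).1 h0).1
  simp only [Pi.add_apply, Function.comp_apply, id, excess_apply, hcancel]
  ring

theorem IsRepresentation.isProbabilityMeasure_atomic {α : Type*} [MeasurableSpace α]
    (hw : IsRepresentation X Y w) (z : ι → α) :
    IsProbabilityMeasure (atomic z (Prod.fst ∘ w + Prod.snd ∘ w)) :=
  (isProbabilityMeasure_atomic_iff (fst_comp_add_snd_comp_nonneg hw.nonneg)).2 hw.sum_eq_one

end Coherent

section Extreme

variable {ι : Type} [Fintype ι] {z : ι → ℝ × ℝ} {w : ι → ℝ × ℝ}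

theorem IsRepresentation.isCoherent_atomic
    (hw : IsRepresentation (Prod.fst ∘ z) (Prod.snd ∘ z) w) :
    IsCoherent (atomic z (Prod.fst ∘ w + Prod.snd ∘ w)) := by
  let _ : MeasurableSpace ι := ⊤
  have hprob := hw.isProbabilityMeasure_atomic (id : ι → ι)
  refine ⟨ι, ⊤, atomic id (Prod.fst ∘ w + Prod.snd ∘ w), hprob, Prod.fst ∘ z, Prod.snd ∘ z,
    fun i ↦ (w i).1 / ((w i).1 + (w i).2), .of_discrete, .of_discrete, .of_discrete, fun i ↦ ?_,
    map_atomic .of_discrete _ _,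
    ae_eq_condExp_of_fiberExcess_eq_zero hw.nonneg hw.fiberExcess_left,
    ae_eq_condExp_of_fiberExcess_eq_zero hw.nonneg hw.fiberExcess_right⟩
  have hfst : 0 ≤ (w i).1 := (hw.nonneg i).1
  have hsnd : 0 ≤ (w i).2 := (hw.nonneg i).2
  exact ⟨div_nonneg hfst (add_nonneg hfst hsnd),
    div_le_one_of_le₀ (le_add_of_nonneg_right hsnd) (add_nonneg hfst hsnd)⟩

/-- Extremality of `η` within the convex set of coherent probability measures; that `η` belongs to
this set is not part of the definition. -/
def IsExtremeCoherent (η : Measure (ℝ × ℝ)) : Prop :=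
  ∀ β : NNReal, 0 < β → β < 1 →
    ∀ m₁ m₂ : Measure (ℝ × ℝ), IsProbabilityMeasure m₁ → IsProbabilityMeasure m₂ →
      IsCoherent m₁ → IsCoherent m₂ →
      η = (β : ENNReal) • m₁ + ((1 - β : NNReal) : ENNReal) • m₂ →
      m₁ = η ∧ m₂ = η

theorem IsExtremeCoherent.atomic_eq_of_midpoint {u v : ι → ℝ × ℝ}
    (hext : IsExtremeCoherent (atomic z (Prod.fst ∘ w + Prod.snd ∘ w)))
    (hu : IsRepresentation (Prod.fst ∘ z) (Prod.snd ∘ z) u)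
    (hv : IsRepresentation (Prod.fst ∘ z) (Prod.snd ∘ z) v)
    (huv : ∀ i, (u i).1 + (u i).2 + ((v i).1 + (v i).2) = 2 * ((w i).1 + (w i).2)) :
    atomic z (Prod.fst ∘ u + Prod.snd ∘ u) = atomic z (Prod.fst ∘ w + Prod.snd ∘ w) := by
  refine (hext (1 / 2) (by positivity) one_half_lt_one _ _ (hu.isProbabilityMeasure_atomic z)
    (hv.isProbabilityMeasure_atomic z) hu.isCoherent_atomic hv.isCoherent_atomic ?_).1
  have hhalf : (1 - 1 / 2 : NNReal) = 1 / 2 := tsub_eq_of_eq_add (add_halves 1).symm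
  rw [hhalf, ← smul_add, ← atomic_add z (fst_comp_add_snd_comp_nonneg hu.nonneg)
    (fst_comp_add_snd_comp_nonneg hv.nonneg), ← atomic_smul]
  congr 1
  ext i
  simp only [Pi.add_apply, Pi.smul_apply, Function.comp_apply, NNReal.smul_def, smul_eq_mul, huv]
  push_cast
  ring

theorem isExtremeRepresentation_of_isExtremeCoherent (hz : z.Injective) (hw : 0 ≤ w)
    (hpos : ∀ i, 0 < (w i).1 + (w i).2)
    [hprob : IsProbabilityMeasure (atomic z (Prod.fst ∘ w + Prod.snd ∘ w))]
    (hR : MemR (atomic z (Prod.fst ∘ w)) (atomic z (Prod.snd ∘ w)))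
    (hext : IsExtremeCoherent (atomic z (Prod.fst ∘ w + Prod.snd ∘ w)))
    (huniq : ∀ μ ν, MemR μ ν → atomic z (Prod.fst ∘ w + Prod.snd ∘ w) = μ + ν →
      μ = atomic z (Prod.fst ∘ w) ∧ ν = atomic z (Prod.snd ∘ w)) :
    IsExtremeRepresentation (Prod.fst ∘ z) (Prod.snd ∘ z) w where
  nonneg := hw
  fiberExcess_left := ((memR_atomic_iff hw).1 hR).1
  fiberExcess_right := ((memR_atomic_iff hw).1 hR).2
  sum_eq_one := (isProbabilityMeasure_atomic_iff (fst_comp_add_snd_comp_nonneg hw)).1 hprob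
  pos := hpos
  eq_of_midpoint u v hu hv huv := by
    have hufst : 0 ≤ Prod.fst ∘ u := fst_comp_nonneg hu.nonneg
    have husnd : 0 ≤ Prod.snd ∘ u := snd_comp_nonneg hu.nonneg
    have hmem : MemR (atomic z (Prod.fst ∘ u)) (atomic z (Prod.snd ∘ u)) :=
      (memR_atomic_iff hu.nonneg).2 ⟨hu.fiberExcess_left, hu.fiberExcess_right⟩
    obtain ⟨hfst, hsnd⟩ := huniq _ _ hmem <|
      (hext.atomic_eq_of_midpoint hu hv huv).symm.trans (atomic_add z hufst husnd)
    ext i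
    · exact congrFun (eq_of_atomic_eq hz hufst (fst_comp_nonneg hw) hfst) i
    · exact congrFun (eq_of_atomic_eq hz husnd (snd_comp_nonneg hw) hsnd) i

theorem isExtremeRepresentation_measureReal {μ ν : Measure (ℝ × ℝ)} [IsProbabilityMeasure (μ + ν)]
    {S : Finset (ℝ × ℝ)} (hS : (μ + ν) (↑S)ᶜ = 0) (hpos : ∀ p ∈ S, 0 < (μ + ν) {p})
    (hR : MemR μ ν) (hext : IsExtremeCoherent (μ + ν))
    (huniq : ∀ μ' ν', MemR μ' ν' → μ + ν = μ' + ν' → μ' = μ ∧ ν' = ν) :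
    IsExtremeRepresentation (fun s : S ↦ s.1.1) (fun s : S ↦ s.1.2)
      fun s : S ↦ (μ.real {s.1}, ν.real {s.1}) := by
  have : IsFiniteMeasure μ := isFiniteMeasure_of_le (μ + ν) (Measure.le_add_right le_rfl)
  have : IsFiniteMeasure ν := isFiniteMeasure_of_le (μ + ν) (Measure.le_add_left le_rfl)
  obtain ⟨hSμ, hSν⟩ := add_eq_zero.1 hS
  let w (s : S) : ℝ × ℝ := (μ.real {s.1}, ν.real {s.1})
  have hw : 0 ≤ w := fun s ↦ ⟨measureReal_nonneg, measureReal_nonneg⟩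
  have hμ : μ = atomic Subtype.val (Prod.fst ∘ w) := eq_atomic_of_measure_compl_eq_zero hSμ
  have hν : ν = atomic Subtype.val (Prod.snd ∘ w) := eq_atomic_of_measure_compl_eq_zero hSν
  have hadd : μ + ν = atomic Subtype.val (Prod.fst ∘ w + Prod.snd ∘ w) := by
    rw [atomic_add _ (fst_comp_nonneg hw) (snd_comp_nonneg hw), ← hμ, ← hν]
  have : IsProbabilityMeasure (atomic Subtype.val (Prod.fst ∘ w + Prod.snd ∘ w)) := hadd ▸ ‹_›
  refine isExtremeRepresentation_of_isExtremeCoherent Subtype.val_injective hw (fun s ↦ ?_)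
    (hμ ▸ hν ▸ hR) (hadd ▸ hext) (by rwa [← hadd, ← hμ, ← hν])
  rw [← measureReal_add_apply]
  exact ENNReal.toReal_pos (hpos s s.2).ne' (measure_ne_top _ _)

end Extreme

theorem stmt16 (η μ ν : Measure (ℝ × ℝ)) [IsProbabilityMeasure η]
    (hcoh : IsCoherent η)
    (hext : ∀ (β : NNReal), 0 < β → β < 1 →
      ∀ m₁ m₂ : Measure (ℝ × ℝ), IsProbabilityMeasure m₁ → IsProbabilityMeasure m₂ →
        IsCoherent m₁ → IsCoherent m₂ →
        η = (β : ENNReal) • m₁ + ((1 - β : NNReal) : ENNReal) • m₂ →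
        m₁ = η ∧ m₂ = η)
    (S : Finset (ℝ × ℝ)) (hS : η (↑S)ᶜ = 0) (hSpos : ∀ p ∈ S, 0 < η {p})
    (hrep : η = μ + ν) (hR : MemR μ ν)
    (huniq : ∀ μ' ν' : Measure (ℝ × ℝ), MemR μ' ν' → η = μ' + ν' → μ' = μ ∧ ν' = ν) :
    ∀ p ∈ S,
      ((μ {p}).toReal / (η {p}).toReal < min p.1 p.2 → μ {p} = 0) ∧
      ((μ {p}).toReal / (η {p}).toReal > max p.1 p.2 → ν {p} = 0) := by
  subst hrep
  have hextreme := isExtremeRepresentation_measureReal hS hSpos hR hext huniq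
  have : IsFiniteMeasure μ := isFiniteMeasure_of_le (μ + ν) (Measure.le_add_right le_rfl)
  have : IsFiniteMeasure ν := isFiniteMeasure_of_le (μ + ν) (Measure.le_add_left le_rfl)
  intro p hp
  have hmass : (μ + ν).real {p} = μ.real {p} + ν.real {p} := measureReal_add_apply
  have hpos : 0 < μ.real {p} + ν.real {p} := hextreme.pos ⟨p, hp⟩
  change (μ.real {p} / (μ + ν).real {p} < _ → _) ∧ (μ.real {p} / (μ + ν).real {p} > _ → _)
  rw [hmass, gt_iff_lt, lt_min_iff, max_lt_iff, div_lt_iff₀ hpos, div_lt_iff₀ hpos,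
    lt_div_iff₀ hpos, lt_div_iff₀ hpos, ← measureReal_eq_zero_iff, ← measureReal_eq_zero_iff]
  exact ⟨fun h ↦ hextreme.fst_eq_zero_of_excess_neg (p := ⟨p, hp⟩) (sub_neg.2 h.1) (sub_neg.2 h.2),
    fun h ↦ hextreme.snd_eq_zero_of_excess_pos (p := ⟨p, hp⟩) (sub_pos.2 h.1) (sub_pos.2 h.2)⟩
end
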